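/- Let (Q, Σ) be a DFA and let c be a natural number. Suppose there exists a word u over Σ such that |Qu| ≤ |Q| − c. Then for every word w over Σ with |Qw| ≤ |Q| − c + 1 there exists a word m over Σ with |m| ≤ c and |Q(w·m·w)| ≤ |Q| − c, where w·m·w denotes the concatenation of the words w, m, w. -/

import Mathlib

/-- The image of a finite set of states `R` under a word (list of letters),
where each letter `s` acts on states via `act s`. -/
def wordImage {Q A : Type*} [DecidableEq Q] (act : A → Q → Q) (R : Finset Q) :
    List A → Finset Q
  | [] => R
  | s :: w => wordImage act (R.image (act s)) w

/-- action of a word on a state -/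
def runWord {Q A : Type*} (act : A → Q → Q) (m : List A) (q : Q) : Q :=
  m.foldl (fun q a => act a q) q

lemma wordImage_eq {Q A : Type*} [DecidableEq Q] (act : A → Q → Q) (m : List A) :
    ∀ R : Finset Q, wordImage act R m = R.image (runWord act m) := by
  induction m with
  | nil => intro R; ext x; simp [wordImage, runWord]
  | cons a m ih =>
    intro R
    rw [wordImage, ih, Finset.image_image]
    rfl

lemma runWord_append {Q A : Type*} (act : A → Q → Q) (m m' : List A) (q : Q) :
    runWord act (m ++ m') q = runWord act m' (runWord act m q) := by
  simp [runWord]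

lemma chain_stable {V : Type*} [AddCommGroup V] [Module ℚ V] [FiniteDimensional ℚ V]
    (D : ℕ → Submodule ℚ V) (hmono : Monotone D)
    (hst : ∀ i, D i = D (i + 1) → D (i + 1) = D (i + 2))
    (K : Submodule ℚ V) (c : ℕ) (hK : D c ≤ K) (hc : Module.finrank ℚ K < c) (n : ℕ) :
    D n ≤ K := by
  have h1 : ∃ i < c, D i = D (i + 1) := by
    by_contra! hne
    have : ∀ i ≤ c, i ≤ Module.finrank ℚ (D i) := by
      intro i
      induction i with
      | zero => simp
      | succ i ih =>
        intro hi
        have := ih (by omega)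
        have hlt : D i < D (i + 1) := lt_of_le_of_ne (hmono (by omega)) (hne i (by omega))
        have := Submodule.finrank_lt_finrank_of_lt hlt
        omega
    have h2 := this c le_rfl
    have h3 := Submodule.finrank_mono hK
    omega
  obtain ⟨i, hi, he⟩ := h1
  have h2 : ∀ j, D (i + j) = D (i + j + 1) := by
    intro j
    induction j with
    | zero => exact he
    | succ j ih => exact hst _ ih
  have h3 : ∀ j, D (i + j) = D i := by
    intro j
    induction j with
    | zero => rfl
    | succ j ih => rw [← ih, h2 j]; rfl
  calc D n ≤ D (i + n) := hmono (by omega)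
    _ = D i := h3 n
    _ ≤ D c := hmono hi.le
    _ ≤ K := hK

/-- the formal sum of the states reached from `P` by `m` -/
noncomputable def yvec {Q A : Type*} (act : A → Q → Q) (P : Finset Q) (m : List A) : Q →₀ ℚ :=
  ∑ p ∈ P, Finsupp.single (runWord act m p) 1

lemma yvec_snoc {Q A : Type*} (act : A → Q → Q) (P : Finset Q) (m : List A) (a : A) :
    yvec act P (m ++ [a]) = Finsupp.lmapDomain ℚ ℚ (act a) (yvec act P m) := by
  simp [yvec, runWord, Finsupp.mapDomain_single]

/-- differences up to length `i` -/
noncomputable def dspan {Q A : Type*} (act : A → Q → Q) (P : Finset Q) (i : ℕ) :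
    Submodule ℚ (Q →₀ ℚ) :=
  Submodule.span ℚ {v | ∃ m : List A, m.length ≤ i ∧ v = yvec act P m - yvec act P []}

lemma mem_dspan {Q A : Type*} (act : A → Q → Q) (P : Finset Q) (i : ℕ) (m : List A)
    (hm : m.length ≤ i) : yvec act P m - yvec act P [] ∈ dspan act P i :=
  Submodule.subset_span ⟨m, hm, rfl⟩

lemma dspan_mono {Q A : Type*} (act : A → Q → Q) (P : Finset Q) : Monotone (dspan act P) := by
  intro i j hij
  apply Submodule.span_mono
  rintro v ⟨m, hm, rfl⟩
  exact ⟨m, hm.trans hij, rfl⟩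

lemma dspan_map {Q A : Type*} (act : A → Q → Q) (P : Finset Q) (i : ℕ) (a : A) :
    dspan act P i ≤ (dspan act P (i + 1)).comap (Finsupp.lmapDomain ℚ ℚ (act a)) := by
  apply Submodule.span_le.2
  rintro v ⟨m, hm, rfl⟩
  simp only [Submodule.comap_coe, Set.mem_preimage, map_sub, ← yvec_snoc, SetLike.mem_coe]
  have h1 := mem_dspan act P (i + 1) (m ++ [a]) (by simpa using hm)
  have h2 := mem_dspan act P (i + 1) ([] ++ [a]) (by simp)
  simpa using Submodule.sub_mem _ h1 h2

lemma dspan_stable {Q A : Type*} (act : A → Q → Q) (P : Finset Q) (i : ℕ)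
    (h : dspan act P i = dspan act P (i + 1)) :
    dspan act P (i + 1) = dspan act P (i + 2) := by
  apply le_antisymm (dspan_mono act P (by omega))
  apply Submodule.span_le.2
  rintro v ⟨m, hm, rfl⟩
  rcases List.eq_nil_or_concat m with rfl | ⟨m, a, rfl⟩
  · simp
  · simp only [List.concat_eq_append] at *
    have h1 : yvec act P m - yvec act P [] ∈ dspan act P i := by
      rw [h]; exact mem_dspan act P _ m (by simpa using hm)
    have h2 := dspan_map act P i a h1
    simp only [Submodule.mem_comap, map_sub, ← yvec_snoc] at h2
    have h3 := mem_dspan act P (i + 1) ([] ++ [a]) (by simp)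
    simpa using Submodule.add_mem _ h2 h3

theorem stmt_2 {Q A : Type*} [Fintype Q] [DecidableEq Q] (act : A → Q → Q)
    (c : ℕ)
    (h : ∃ u : List A, (wordImage act Finset.univ u).card ≤ Fintype.card Q - c)
    (w : List A)
    (hw : (wordImage act Finset.univ w).card ≤ Fintype.card Q - c + 1) :
    ∃ m : List A, m.length ≤ c ∧
      (wordImage act Finset.univ (w ++ m ++ w)).card ≤ Fintype.card Q - c := by
  by_contra! hcon
  obtain ⟨u, hu⟩ := h
  rw [wordImage_eq] at hu hw
  obtain ⟨P, hP⟩ : ∃ P, P = Finset.univ.image (runWord act w) := ⟨_, rfl⟩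
  rw [← hP] at hw
  have hmemP : ∀ q, runWord act w q ∈ P := fun q => by simp [hP]
  let f : Q → P := fun q => ⟨runWord act w q, hmemP q⟩
  have hf : Function.Surjective f := by
    rintro ⟨p, hp⟩
    have hp' := hp
    rw [hP] at hp'
    simp only [Finset.mem_image, Finset.mem_univ, true_and] at hp'
    obtain ⟨q, hq⟩ := hp'
    exact ⟨q, Subtype.ext hq⟩
  let g : List A → P → P := fun m p => f (runWord act m p)
  -- the words `m` of length at most `c` act surjectively
  have hcard : ∀ m : List A, m.length ≤ c →
      Fintype.card Q - c < (Finset.univ.image (g m)).card := by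
    intro m hm
    have h1 := hcon m hm
    rw [wordImage_eq] at h1
    refine h1.trans_le ?_
    rw [← Finset.card_image_of_injective _ (Subtype.val_injective (p := (· ∈ P)))]
    apply Finset.card_le_card
    intro x hx
    simp only [Finset.mem_image, Finset.mem_univ, true_and, runWord_append] at hx
    obtain ⟨q, rfl⟩ := hx
    exact Finset.mem_image_of_mem _ (Finset.mem_image.2 ⟨f q, Finset.mem_univ _, rfl⟩)
  have hPc : Fintype.card P = P.card := Fintype.card_coe P
  have hsurj : ∀ m : List A, m.length ≤ c → Function.Surjective (g m) := by
    intro m hm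
    suffices hs : Finset.univ.image (g m) = Finset.univ by
      intro q
      have hq : q ∈ Finset.univ.image (g m) := by rw [hs]; exact Finset.mem_univ q
      simpa only [Finset.mem_image, Finset.mem_univ, true_and] using hq
    apply Finset.eq_univ_of_card
    have h1 := hcard m hm
    have h2 := Finset.card_le_univ (Finset.univ.image (g m))
    omega
  have hPcard : P.card = Fintype.card Q - c + 1 := by
    have h1 := hcard [] (by simp)
    have h2 := Finset.card_le_univ (Finset.univ.image (g []))
    omega
  let T : (Q →₀ ℚ) →ₗ[ℚ] (P →₀ ℚ) := Finsupp.lmapDomain ℚ ℚ f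
  have hT : ∀ m, T (yvec act P m) = ∑ p : P, Finsupp.single (g m p) 1 := by
    intro m
    simp only [T, yvec, map_sum, Finsupp.lmapDomain_apply, Finsupp.mapDomain_single]
    exact (Finset.sum_coe_sort P (fun p => Finsupp.single (f (runWord act m p)) (1 : ℚ))).symm
  have hT1 : ∀ m : List A, m.length ≤ c →
      T (yvec act P m) = ∑ p : P, Finsupp.single p 1 := by
    intro m hm
    rw [hT]
    have hb : Function.Bijective (g m) := (hsurj m hm).bijective_of_finite
    exact hb.sum_comp (fun p => Finsupp.single p (1 : ℚ))
  have hTs : Function.Surjective T := Finsupp.mapDomain_surjective hf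
  have hdim : Module.finrank ℚ (LinearMap.ker T) < c := by
    have h1 := LinearMap.finrank_range_add_finrank_ker T
    rw [LinearMap.range_eq_top.2 hTs, finrank_top] at h1
    simp only [Module.finrank_finsupp_self] at h1
    omega
  have hK : dspan act P c ≤ LinearMap.ker T := by
    apply Submodule.span_le.2
    rintro v ⟨m, hm, rfl⟩
    simp only [SetLike.mem_coe, LinearMap.mem_ker, map_sub]
    rw [hT1 m hm, hT1 [] (by simp), sub_self]
  have hall := chain_stable (dspan act P) (dspan_mono act P) (dspan_stable act P)
    (LinearMap.ker T) c hK hdim u.length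
  have h1 := hall (mem_dspan act P _ u le_rfl)
  rw [LinearMap.mem_ker, map_sub, hT1 [] (by simp), hT, sub_eq_zero] at h1
  have hgu : Function.Surjective (g u) := by
    intro q
    by_contra! hq
    have h2 := DFunLike.congr_fun h1 q
    rw [Finsupp.finsetSum_apply, Finsupp.finsetSum_apply] at h2
    simp [Finsupp.single_apply, hq] at h2
  have h3 : P.card ≤ (Finset.univ.image (runWord act u)).card := by
    have h4 : (Finset.univ : Finset P) ⊆ (Finset.univ.image (runWord act u)).image f := by
      intro q _
      obtain ⟨p, rfl⟩ := hgu q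
      exact Finset.mem_image_of_mem _ (Finset.mem_image_of_mem _ (Finset.mem_univ _))
    have h5 := (Finset.card_le_card h4).trans Finset.card_image_le
    rwa [Finset.card_univ, hPc] at h5
  omega
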